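/- Let N ≥ 1 and let T1 : 𝕋 → Matrix q₁ p₁ ℂ, T2 : 𝕋 → Matrix q₁ p₂ ℂ be continuous. Suppose: U_i : 𝕋 → Matrix q₁ p₂ ℂ is continuous and inner; U_o : 𝕋 → Matrix p₂ p₂ ℂ is continuous, in H∞, pointwise invertible with inverse in H∞, and T2 = U_i·U_o pointwise. Define Y := (I − U_iU_i^∼)T1; let γ > ‖Y‖∞ and let Y_o be continuous, pointwise invertible, with Y_o, Y_o⁻¹ ∈ H∞ and Y_oᴴY_o = γ²·I − YᴴY pointwise; define R := U_i^∼·T1·Y_o⁻¹. Let V₀, …, V_{N−1} be p₂×p₁ complex matrices and let V(z) := Σ_{i=0}^{N−1} V_i·z^{−i} for z ∈ 𝕋. Define R̂(V)(z) := z^N·R(z) − U_o(z)·(z^N·V(z))·Y_o(z)⁻¹. If D : 𝕋 → Matrix p₂ p₁ ℂ is continuous with D ∈ H∞, and X := U_o·D·Y_o⁻¹ satisfies ‖R̂(V) − X‖∞ ≤ 1, then ‖(T1 − T2·V) − (z^{−N}·T2)·D‖∞ ≤ γ; equivalently, the function Q(z) := V(z) + z^{−N}·D(z) satisfies ‖T1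 − T2·Q‖∞ ≤ γ. -/

import Mathlib

open Matrix

/-- The spectral norm (ℓ²→ℓ² operator norm, largest singular value) of a complex matrix. -/
noncomputable def specNorm {m n : Type*} [Fintype m] [Fintype n] [DecidableEq n]
    (M : Matrix m n ℂ) : ℝ :=
  ‖LinearMap.toContinuousLinearMap (Matrix.toEuclideanLin M)‖

/-- The `H∞` norm of a matrix-valued function on the unit circle:
`‖F‖∞ = sup_{z ∈ 𝕋} ‖F(z)‖`. -/
noncomputable def hinfNorm {m n : Type*} [Fintype m] [Fintype n] [DecidableEq n]
    (F : Circle → Matrix m n ℂ) : ℝ :=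
  ⨆ z : Circle, specNorm (F z)

/-- A matrix-valued function `F` on the unit circle belongs to `H∞` if there is a
matrix-valued function `G`, continuous on the closed unit disc and analytic on the open
unit disc, with `F(z) = G(z⁻¹)` for all `z` on the circle. -/
def MemHInf {m n : Type*} (F : Circle → Matrix m n ℂ) : Prop :=
  ∃ G : ℂ → Matrix m n ℂ,
    (∀ i j, ContinuousOn (fun w => G w i j) (Metric.closedBall (0 : ℂ) 1)) ∧
    (∀ i j, AnalyticOn ℂ (fun w => G w i j) (Metric.ball (0 : ℂ) 1)) ∧
    (∀ z : Circle, F z = G ((z : ℂ)⁻¹))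

/-- The distance from `R` to `H∞` in the `‖·‖∞` norm:
`dist(R, H∞) = inf { ‖R − X‖∞ : X continuous, X ∈ H∞ }`. -/
noncomputable def distHInf {m n : Type*} [Fintype m] [Fintype n] [DecidableEq n]
    (R : Circle → Matrix m n ℂ) : ℝ :=
  sInf {c : ℝ | ∃ X : Circle → Matrix m n ℂ,
    Continuous X ∧ MemHInf X ∧ c = hinfNorm fun z => R z - X z}

/-! Write `E = T1 - T2 Q` with `Q = V + z^{-N} D`. Since `U_i` is an isometry, `E` splits
orthogonally into a part in the range of `U_i`, with coordinates `U_i^∼ E = U_i^∼ T1 - U_o Q`, and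
the part `(I - U_i U_i^∼) E = Y`, which does not depend on `Q`. Hence `E^∼ E ≤ γ²` amounts to
`(U_i^∼ E)^∼ (U_i^∼ E) ≤ γ² - Y^∼ Y = Y_o^∼ Y_o`, and conjugating by `Y_o⁻¹` turns this into
contractivity of `R - U_o Q Y_o⁻¹ = z^{-N} (R̂(V) - X)`, where `z^{-N}` is unimodular. -/

section SpectralNorm

variable {m n : Type*} [Fintype m] [Fintype n] [DecidableEq n]

open scoped Matrix.Norms.L2Operator

theorem specNorm_eq_l2_opNorm (A : Matrix m n ℂ) : specNorm A = ‖A‖ := rfl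

theorem specNorm_nonneg (A : Matrix m n ℂ) : 0 ≤ specNorm A := norm_nonneg A

theorem specNorm_smul (c : ℂ) (A : Matrix m n ℂ) : specNorm (c • A) = ‖c‖ * specNorm A :=
  norm_smul c A

theorem continuous_specNorm : Continuous (specNorm : Matrix m n ℂ → ℝ) := continuous_norm

theorem hinfNorm_nonneg (F : Circle → Matrix m n ℂ) : 0 ≤ hinfNorm F :=
  Real.iSup_nonneg fun z => specNorm_nonneg (F z)

theorem hinfNorm_le_iff {F : Circle → Matrix m n ℂ} (hF : Continuous F) {c : ℝ} :
    hinfNorm F ≤ c ↔ ∀ z, specNorm (F z) ≤ c :=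
  ciSup_le_iff (isCompact_range (continuous_specNorm.comp hF)).bddAbove

open scoped MatrixOrder ComplexOrder

theorem specNorm_le_iff_conjTranspose_mul_self_le (A : Matrix m n ℂ) {c : ℝ} (hc : 0 ≤ c) :
    specNorm A ≤ c ↔ Aᴴ * A ≤ (c : ℂ) ^ 2 • (1 : Matrix n n ℂ) := by
  have algebraMap_sq : algebraMap ℝ (Matrix n n ℂ) (c ^ 2) = (c : ℂ) ^ 2 • 1 := by
    rw [IsScalarTower.algebraMap_apply ℝ ℂ, Algebra.algebraMap_eq_smul_one, Complex.coe_algebraMap,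
      Complex.ofReal_pow]
  have gram_nonneg : 0 ≤ Aᴴ * A := (posSemidef_conjTranspose_mul_self A).nonneg
  calc specNorm A ≤ c
      ↔ ‖A‖ * ‖A‖ ≤ c ^ 2 := by rw [specNorm_eq_l2_opNorm, ← sq, sq_le_sq₀ (norm_nonneg A) hc]
    _ ↔ ‖Aᴴ * A‖ ≤ c ^ 2 := by rw [l2_opNorm_conjTranspose_mul_self]
    _ ↔ Aᴴ * A ≤ (c : ℂ) ^ 2 • (1 : Matrix n n ℂ) := by
      rw [CStarAlgebra.norm_le_iff_le_algebraMap _ (sq_nonneg c) gram_nonneg, algebraMap_sq]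

theorem specNorm_mul_inv_le_one_iff (A : Matrix m n ℂ) {B : Matrix n n ℂ} (hB : IsUnit B) :
    specNorm (A * B⁻¹) ≤ 1 ↔ Aᴴ * A ≤ Bᴴ * B := by
  have hA : A * B⁻¹ * B = A :=
    nonsing_inv_mul_cancel_right B A ((isUnit_iff_isUnit_det B).1 hB)
  have conjugated_gap : star B * (1 - (A * B⁻¹)ᴴ * (A * B⁻¹)) * B = Bᴴ * B - Aᴴ * A :=
    calc star B * (1 - (A * B⁻¹)ᴴ * (A * B⁻¹)) * B
        = Bᴴ * B - (A * B⁻¹ * B)ᴴ * (A * B⁻¹ * B) := by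
          simp only [star_eq_conjTranspose, conjTranspose_mul, Matrix.mul_sub, Matrix.sub_mul,
            Matrix.mul_one, Matrix.mul_assoc]
      _ = Bᴴ * B - Aᴴ * A := by rw [hA]
  rw [specNorm_le_iff_conjTranspose_mul_self_le _ zero_le_one, Complex.ofReal_one, one_pow,
    one_smul, ← sub_nonneg, ← hB.star_left_conjugate_nonneg_iff, conjugated_gap, sub_nonneg]

end SpectralNorm

section Isometry

variable {l m n R : Type*} [Fintype m] [Fintype n] [DecidableEq n] [Ring R] [StarRing R]

theorem isStarProjection_mul_conjTranspose_self {U : Matrix m n R} (hU : Uᴴ * U = 1) :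
    IsStarProjection (U * Uᴴ) where
  isIdempotentElem := by
    rw [IsIdempotentElem, Matrix.mul_assoc, ← Matrix.mul_assoc Uᴴ, hU, Matrix.one_mul]
  isSelfAdjoint := isHermitian_mul_conjTranspose_self U

variable [DecidableEq m]

theorem conjTranspose_mul_self_eq_add_of_isometry {U : Matrix m n R} (hU : Uᴴ * U = 1)
    (A : Matrix m l R) :
    Aᴴ * A = (Uᴴ * A)ᴴ * (Uᴴ * A) + ((1 - U * Uᴴ) * A)ᴴ * ((1 - U * Uᴴ) * A) := by
  have proj : (1 - U * Uᴴ)ᴴ * (1 - U * Uᴴ) = 1 - U * Uᴴ := by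
    have isProj := (isStarProjection_mul_conjTranspose_self hU).one_sub
    rw [← star_eq_conjTranspose (1 - U * Uᴴ), isProj.isSelfAdjoint.star_eq,
      isProj.isIdempotentElem.eq]
  calc Aᴴ * A = Aᴴ * (U * Uᴴ) * A + Aᴴ * (1 - U * Uᴴ) * A := by
        rw [← Matrix.add_mul, ← Matrix.mul_add, add_sub_cancel, Matrix.mul_one]
    _ = Aᴴ * (U * Uᴴ) * A + Aᴴ * ((1 - U * Uᴴ)ᴴ * (1 - U * Uᴴ)) * A := by rw [proj]
    _ = (Uᴴ * A)ᴴ * (Uᴴ * A) + ((1 - U * Uᴴ) * A)ᴴ * ((1 - U * Uᴴ) * A) := by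
        simp only [conjTranspose_mul, conjTranspose_conjTranspose, Matrix.mul_assoc]

open scoped MatrixOrder in
theorem specNorm_mul_inv_le_one_iff_specNorm_sub_le [Fintype l] [DecidableEq l]
    {U : Matrix m n ℂ} (hU : Uᴴ * U = 1) (T : Matrix m l ℂ) (W : Matrix n l ℂ)
    {B : Matrix l l ℂ} (hB : IsUnit B) {γ : ℝ} (hγ : 0 ≤ γ)
    (hfact : Bᴴ * B = (γ : ℂ) ^ 2 • (1 : Matrix l l ℂ)
      - ((1 - U * Uᴴ) * T)ᴴ * ((1 - U * Uᴴ) * T)) :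
    specNorm ((Uᴴ * T - W) * B⁻¹) ≤ 1 ↔ specNorm (T - U * W) ≤ γ := by
  have range_part : Uᴴ * (T - U * W) = Uᴴ * T - W := by
    rw [Matrix.mul_sub, ← Matrix.mul_assoc, hU, Matrix.one_mul]
  have complement_part : (1 - U * Uᴴ) * (T - U * W) = (1 - U * Uᴴ) * T := by
    have annihilates : (1 - U * Uᴴ) * U = 0 := by
      rw [Matrix.sub_mul, Matrix.one_mul, Matrix.mul_assoc, hU, Matrix.mul_one, sub_self]
    rw [Matrix.mul_sub, ← Matrix.mul_assoc _ U, annihilates, Matrix.zero_mul, sub_zero]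
  rw [specNorm_mul_inv_le_one_iff _ hB, hfact, specNorm_le_iff_conjTranspose_mul_self_le _ hγ,
    conjTranspose_mul_self_eq_add_of_isometry hU (T - U * W), range_part, complement_part,
    le_sub_iff_add_le]

end Isometry

theorem delayed_residual_eq_smul {𝕜 l l' m n : Type*} [Field 𝕜] [Fintype l] [Fintype n]
    {c : 𝕜} (hc : c ≠ 0) (S : Matrix m l 𝕜) (A : Matrix m n 𝕜) (V D : Matrix n l 𝕜)
    (B : Matrix l l' 𝕜) :
    c • (S * B) - A * (c • V) * B - A * D * B = c • ((S - A * (V + c⁻¹ • D)) * B) := by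
  have delay_cancels : c • (V + c⁻¹ • D) = c • V + D := by rw [smul_add, smul_inv_smul₀ hc]
  calc c • (S * B) - A * (c • V) * B - A * D * B
      = (c • S - A * (c • V + D)) * B := by
        simp only [Matrix.sub_mul, Matrix.mul_add, Matrix.add_mul, Matrix.smul_mul, sub_sub]
    _ = c • ((S - A * (V + c⁻¹ • D)) * B) := by
        rw [← delay_cancels, Matrix.mul_smul, ← smul_sub, Matrix.smul_mul]

theorem continuous_matrix_inv {R X n : Type*} [NormedCommRing R] [HasSummableGeomSeries R]
    [TopologicalSpace X] [Fintype n] [DecidableEq n] {F : X → Matrix n n R}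
    (hF : Continuous F) (hunit : ∀ x, IsUnit (F x)) :
    Continuous fun x => (F x)⁻¹ := by
  have inv_continuousAt (x : X) : ContinuousAt Inv.inv (F x) := by
    obtain ⟨u, hu⟩ := (isUnit_iff_isUnit_det (F x)).1 (hunit x)
    exact continuousAt_matrix_inv _ (hu ▸ NormedRing.inverse_continuousAt u)
  exact continuous_iff_continuousAt.2 fun x => (inv_continuousAt x).comp hF.continuousAt

theorem continuous_circle_coe_inv : Continuous fun z : Circle => (z : ℂ)⁻¹ :=
  continuous_subtype_val.inv₀ Circle.coe_ne_zero

theorem continuous_fir {E : Type*} [AddCommMonoid E] [Module ℂ E] [TopologicalSpace E]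
    [ContinuousAdd E] [ContinuousSMul ℂ E] {N : ℕ} (V : Fin N → E) :
    Continuous fun z : Circle => ∑ i : Fin N, (z : ℂ)⁻¹ ^ (i : ℕ) • V i :=
  continuous_finsetSum _ fun i _ => (continuous_circle_coe_inv.pow i).smul continuous_const

theorem distributed_hinf_identity_suboptimal_general {m n l : Type*} [Fintype m] [DecidableEq m]
    [Fintype n] [DecidableEq n] [Fintype l] [DecidableEq l] (N : ℕ)
    {T1 : Circle → Matrix m l ℂ} (hT1 : Continuous T1)
    {T2 Ui : Circle → Matrix m n ℂ} (hUi : Continuous Ui)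
    (hUiInner : ∀ z, (Ui z)ᴴ * Ui z = 1)
    {Uo : Circle → Matrix n n ℂ} (hUo : Continuous Uo) (hT2fact : ∀ z, T2 z = Ui z * Uo z)
    {Y : Circle → Matrix m l ℂ} (hY : ∀ z, Y z = (1 - Ui z * (Ui z)ᴴ) * T1 z)
    {γ : ℝ} (hγ : 0 ≤ γ)
    {Yo : Circle → Matrix l l ℂ} (hYo : Continuous Yo) (hYoUnit : ∀ z, IsUnit (Yo z))
    (hYofact : ∀ z, (Yo z)ᴴ * Yo z = (γ : ℂ) ^ 2 • (1 : Matrix l l ℂ) - (Y z)ᴴ * Y z)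
    {V D : Circle → Matrix n l ℂ} (hV : Continuous V) (hD : Continuous D) :
    hinfNorm (fun z : Circle => (z : ℂ) ^ N • ((Ui z)ᴴ * T1 z * (Yo z)⁻¹)
        - Uo z * ((z : ℂ) ^ N • V z) * (Yo z)⁻¹ - Uo z * D z * (Yo z)⁻¹) ≤ 1 ↔
      hinfNorm (fun z : Circle => T1 z - T2 z * (V z + (z : ℂ)⁻¹ ^ N • D z)) ≤ γ := by
  have hYoInv : Continuous fun z => (Yo z)⁻¹ := continuous_matrix_inv hYo hYoUnit
  have hInv : Continuous fun z : Circle => (z : ℂ)⁻¹ := continuous_circle_coe_inv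
  simp only [hT2fact]
  rw [hinfNorm_le_iff (by fun_prop), hinfNorm_le_iff (by fun_prop)]
  refine forall_congr' fun z => ?_
  have residual_norm : specNorm ((z : ℂ) ^ N • ((Ui z)ᴴ * T1 z * (Yo z)⁻¹)
      - Uo z * ((z : ℂ) ^ N • V z) * (Yo z)⁻¹ - Uo z * D z * (Yo z)⁻¹)
      = specNorm (((Ui z)ᴴ * T1 z - Uo z * (V z + (z : ℂ)⁻¹ ^ N • D z)) * (Yo z)⁻¹) := by
    rw [delayed_residual_eq_smul (pow_ne_zero N z.coe_ne_zero), specNorm_smul, norm_pow,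
      Circle.norm_coe, one_pow, one_mul, inv_pow]
  rw [residual_norm, Matrix.mul_assoc (Ui z)]
  refine specNorm_mul_inv_le_one_iff_specNorm_sub_le (hUiInner z) _ _ (hYoUnit z) hγ ?_
  rw [hYofact z, hY z]

/-- Distributed H∞ control subject to delays, `T3 = I` case (Theorem 3, part 2):
with `V(z) = Σ_{i<N} V_i z^{−i}` a FIR filter and
`R̂(V)(z) = z^N R(z) − U_o(z)(z^N V(z)) Y_o(z)⁻¹`, if `‖R̂(V) − X‖∞ ≤ 1`
with `X = U_o D Y_o⁻¹`, `D ∈ H∞`, then `‖(T1 − T2 V) − (z^{−N} T2) D‖∞ ≤ γ`;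
equivalently, `Q(z) = V(z) + z^{−N} D(z)` satisfies `‖T1 − T2 Q‖∞ ≤ γ`. -/
theorem distributed_hinf_identity_suboptimal (N : ℕ) (hN : 1 ≤ N) (q1 p1 p2 : ℕ)
    (T1 : Circle → Matrix (Fin q1) (Fin p1) ℂ) (hT1 : Continuous T1)
    (T2 : Circle → Matrix (Fin q1) (Fin p2) ℂ) (hT2 : Continuous T2)
    (Ui : Circle → Matrix (Fin q1) (Fin p2) ℂ) (hUic : Continuous Ui)
    (hUiInner : ∀ z, (Ui z)ᴴ * Ui z = 1)
    (Uo : Circle → Matrix (Fin p2) (Fin p2) ℂ) (hUoc : Continuous Uo)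
    (hUoH : MemHInf Uo) (hUoUnit : ∀ z, IsUnit (Uo z))
    (hUoInvH : MemHInf fun z => (Uo z)⁻¹)
    (hT2fact : ∀ z, T2 z = Ui z * Uo z)
    (Y : Circle → Matrix (Fin q1) (Fin p1) ℂ)
    (hY : Y = fun z => (1 - Ui z * (Ui z)ᴴ) * T1 z)
    (γ : ℝ) (hγ : hinfNorm Y < γ)
    (Yo : Circle → Matrix (Fin p1) (Fin p1) ℂ) (hYoc : Continuous Yo)
    (hYoUnit : ∀ z, IsUnit (Yo z)) (hYoH : MemHInf Yo)
    (hYoInvH : MemHInf fun z => (Yo z)⁻¹)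
    (hYofact : ∀ z, (Yo z)ᴴ * Yo z
      = ((γ : ℂ) ^ 2) • (1 : Matrix (Fin p1) (Fin p1) ℂ) - (Y z)ᴴ * Y z)
    (R : Circle → Matrix (Fin p2) (Fin p1) ℂ)
    (hR : R = fun z => (Ui z)ᴴ * T1 z * (Yo z)⁻¹)
    (V : Fin N → Matrix (Fin p2) (Fin p1) ℂ)
    (Vf : Circle → Matrix (Fin p2) (Fin p1) ℂ)
    (hVf : Vf = fun z : Circle => ∑ i : Fin N, ((z : ℂ)⁻¹) ^ (i : ℕ) • V i)
    (Rhat : Circle → Matrix (Fin p2) (Fin p1) ℂ)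
    (hRhat : Rhat = fun z : Circle =>
      ((z : ℂ) ^ N) • R z - Uo z * (((z : ℂ) ^ N) • Vf z) * (Yo z)⁻¹)
    (D : Circle → Matrix (Fin p2) (Fin p1) ℂ) (hDc : Continuous D) (hDH : MemHInf D)
    (X : Circle → Matrix (Fin p2) (Fin p1) ℂ)
    (hX : X = fun z => Uo z * D z * (Yo z)⁻¹)
    (hRX : hinfNorm (fun z => Rhat z - X z) ≤ 1) :
    hinfNorm (fun z : Circle =>
        (T1 z - T2 z * Vf z) - (((z : ℂ)⁻¹ ^ N) • T2 z) * D z) ≤ γ ∧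
    hinfNorm (fun z : Circle =>
        T1 z - T2 z * (Vf z + ((z : ℂ)⁻¹ ^ N) • D z)) ≤ γ := by
  subst hVf hR hX hRhat
  have hQ := (distributed_hinf_identity_suboptimal_general N hT1 hUic hUiInner hUoc hT2fact
    (congrFun hY) ((hinfNorm_nonneg Y).trans hγ.le) hYoc hYoUnit hYofact
    (continuous_fir V) hDc).1 hRX
  exact ⟨by simpa only [Matrix.mul_add, Matrix.mul_smul, Matrix.smul_mul, sub_sub] using hQ, hQ⟩
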